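/- arXiv:2312.04733 — 5 statements merged into one kernel-verified Lean document; each statement's English description precedes it below -/
import Mathlib

section
/- Let u : ℝ^q → ℝ^p be twice continuously differentiable on the closed segment joining ᾱ to ᾱ + δα, with the operator norm of its second derivative bounded by M > 0 on that segment. Let ε > 0 and let N be a positive integer with N ≥ M‖δα‖²/(2ε). Then the per-step increment δα/N and per-step tolerance ε/N satisfy the admissibility condition of the single-step bound, namely ‖δα/N‖ ≤ √(2(ε/N)/M); consequently at each homotopy step the first-order update ‖u(β) + Du(β)(δα/N) − u(β + δα/N)‖ ≤ ε/N for every β on the segment joining ᾱ to ᾱ + (N−1)δα/N, and the accumulated per-step errors total at most ε. -/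
theorem taylor_aux {E F : Type*} [NormedAddCommGroup E] [NormedSpace ℝ E]
    [NormedAddCommGroup F] [NormedSpace ℝ F] (u : E → F) (u' : E → (E →L[ℝ] F))
    (u'' : E → (E →L[ℝ] (E →L[ℝ] F))) (S : Set E) (hS : Convex ℝ S) (M : ℝ)
    (hd1 : ∀ x ∈ S, HasFDerivWithinAt u (u' x) S x)
    (hd2 : ∀ x ∈ S, HasFDerivWithinAt u' (u'' x) S x)
    (hbound : ∀ x ∈ S, ‖u'' x‖ ≤ M) (β h : E) (hβ : β ∈ S) (hβh : β + h ∈ S) :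
    ‖u β + u' β h - u (β + h)‖ ≤ M * ‖h‖ ^ 2 / 2 := by
  have hmem : ∀ t ∈ Set.Icc (0:ℝ) 1, β + t • h ∈ S := fun t ht =>
    hS.add_smul_mem hβ hβh ht
  have hder : ∀ t ∈ Set.Icc (0:ℝ) 1,
      HasDerivWithinAt (fun t : ℝ => u (β + t • h) - u β - t • u' β h)
        (u' (β + t • h) h - u' β h) (Set.Icc 0 1) t := by
    intro t ht
    have h1 : HasDerivWithinAt (fun t : ℝ => β + t • h) h (Set.Icc 0 1) t := by
      simpa using (((hasDerivAt_id t).smul_const h).const_add β).hasDerivWithinAt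
    have h2 := (hd1 _ (hmem t ht)).comp_hasDerivWithinAt t h1 hmem
    have h3 : HasDerivWithinAt (fun t : ℝ => t • u' β h) (u' β h) (Set.Icc 0 1) t := by
      simpa using ((hasDerivAt_id t).smul_const (u' β h)).hasDerivWithinAt
    exact (h2.sub_const (u β)).sub h3
  have key := image_norm_le_of_norm_deriv_right_le_deriv_boundary
    (f := fun t : ℝ => u (β + t • h) - u β - t • u' β h)
    (f' := fun t => u' (β + t • h) h - u' β h) (a := 0) (b := 1)
    (B := fun t => M * ‖h‖ ^ 2 / 2 * t ^ 2) (B' := fun t => M * ‖h‖ ^ 2 * t)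
    (fun t ht => (hder t ht).continuousWithinAt)
    (fun t ht => (hder t ⟨ht.1, ht.2.le⟩).mono_of_mem_nhdsWithin
      (Icc_mem_nhdsGE_of_mem ht))
    (by simp)
    (fun t => by
      have := ((hasDerivAt_pow 2 t).const_mul (M * ‖h‖ ^ 2 / 2))
      exact this.congr_deriv (by push_cast; ring))
    (fun t ht => by
      have hm := hmem t ⟨ht.1, ht.2.le⟩
      have h1 := hS.norm_image_sub_le_of_norm_hasFDerivWithin_le hd2 hbound hβ hm
      have h2 := (u' (β + t • h) - u' β).le_opNorm h
      rw [add_sub_cancel_left, norm_smul, Real.norm_of_nonneg ht.1] at h1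
      calc ‖u' (β + t • h) h - u' β h‖ ≤ ‖u' (β + t • h) - u' β‖ * ‖h‖ := h2
        _ ≤ M * (t * ‖h‖) * ‖h‖ := by gcongr
        _ = _ := by ring)
    (Set.right_mem_Icc.2 zero_le_one)
  have e : u β + u' β h - u (β + h) = -(u (β + h) - u β - u' β h) := by abel
  rw [e, norm_neg]
  simpa using key

/-- homotopic step-count bound (paper's Corollary).
If the second derivative of `u` has operator norm at most `M > 0` on the segment from
`α₀` to `α₀ + δα` and `N ≥ M‖δα‖²/(2ε)` is a positive integer, then the per-step
increment `δα/N` and tolerance `ε/N` satisfy the single-step admissibility condition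
`‖δα/N‖ ≤ √(2(ε/N)/M)`; consequently the first-order update at each homotopy step has
error at most `ε/N` for every base point `β` on the segment from `α₀` to
`α₀ + (N−1)δα/N`, and the accumulated per-step errors total at most `ε`. -/
theorem stmt_1 {q p : ℕ}
    (u : EuclideanSpace ℝ (Fin q) → EuclideanSpace ℝ (Fin p))
    (u' : EuclideanSpace ℝ (Fin q) →
      (EuclideanSpace ℝ (Fin q) →L[ℝ] EuclideanSpace ℝ (Fin p)))
    (u'' : EuclideanSpace ℝ (Fin q) →
      (EuclideanSpace ℝ (Fin q) →L[ℝ]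
        (EuclideanSpace ℝ (Fin q) →L[ℝ] EuclideanSpace ℝ (Fin p))))
    (α₀ δα : EuclideanSpace ℝ (Fin q)) (M ε : ℝ) (N : ℕ)
    (hM : 0 < M) (hε : 0 < ε) (hN : 0 < N)
    (hd1 : ∀ x ∈ segment ℝ α₀ (α₀ + δα),
      HasFDerivWithinAt u (u' x) (segment ℝ α₀ (α₀ + δα)) x)
    (hd2 : ∀ x ∈ segment ℝ α₀ (α₀ + δα),
      HasFDerivWithinAt u' (u'' x) (segment ℝ α₀ (α₀ + δα)) x)
    (hcont : ContinuousOn u'' (segment ℝ α₀ (α₀ + δα)))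
    (hbound : ∀ x ∈ segment ℝ α₀ (α₀ + δα), ‖u'' x‖ ≤ M)
    (hNbig : M * ‖δα‖ ^ 2 / (2 * ε) ≤ (N : ℝ)) :
    ‖((N : ℝ)⁻¹ • δα)‖ ≤ Real.sqrt (2 * (ε / N) / M) ∧
    (∀ β ∈ segment ℝ α₀ (α₀ + (((N : ℝ) - 1) / N) • δα),
      ‖u β + u' β ((N : ℝ)⁻¹ • δα) - u (β + (N : ℝ)⁻¹ • δα)‖ ≤ ε / N) ∧
    (N : ℝ) * (ε / N) ≤ ε := by
  have hNR : (0:ℝ) < N := by exact_mod_cast hN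
  have hN1 : (1:ℝ) ≤ N := by exact_mod_cast hN
  have hnorm : ‖((N : ℝ)⁻¹ • δα)‖ = ‖δα‖ / N := by
    rw [norm_smul, norm_inv, Real.norm_of_nonneg hNR.le]; ring
  have hb : M * ‖δα‖ ^ 2 ≤ N * (2 * ε) := by
    rwa [div_le_iff₀ (by positivity)] at hNbig
  have hstep : M * ‖((N : ℝ)⁻¹ • δα)‖ ^ 2 ≤ 2 * (ε / N) := by
    rw [hnorm]
    have : M * (‖δα‖ / N) ^ 2 = M * ‖δα‖ ^ 2 / N ^ 2 := by ring
    rw [this, div_le_iff₀ (by positivity)]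
    have : 2 * (ε / N) * (N:ℝ) ^ 2 = N * (2 * ε) := by field_simp
    rwa [this]
  refine ⟨?_, ?_, ?_⟩
  · apply Real.le_sqrt_of_sq_le
    rw [le_div_iff₀ hM]
    linarith
  · intro β hβ
    rw [segment_eq_image'] at hβ
    obtain ⟨t, ⟨ht0, ht1⟩, rfl⟩ := hβ
    have hmem : ∀ s : ℝ, 0 ≤ s → s ≤ 1 → α₀ + s • δα ∈ segment ℝ α₀ (α₀ + δα) := by
      intro s h0 h1
      rw [segment_eq_image']
      exact ⟨s, ⟨h0, h1⟩, by simp⟩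
    have hc0 : 0 ≤ ((N:ℝ) - 1) / N := div_nonneg (by linarith) hNR.le
    have hc1 : ((N:ℝ) - 1) / N + (N:ℝ)⁻¹ = 1 := by field_simp; ring
    have hi : 0 < (N:ℝ)⁻¹ := by positivity
    have hts : t * (((N:ℝ) - 1) / N) ≤ ((N:ℝ) - 1) / N := mul_le_of_le_one_left hc0 ht1
    simp only [add_sub_cancel_left, smul_smul]
    refine (taylor_aux u u' u'' _ (convex_segment _ _) M hd1 hd2 hbound _ _
      (hmem _ (by positivity) (by linarith)) ?_).trans (by linarith)
    rw [add_assoc, ← add_smul]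
    exact hmem _ (by positivity) (by linarith)
  · rw [mul_div_cancel₀ _ hNR.ne']
end

section
/- Let S be an n×n real symmetric positive semidefinite matrix and let f, p_i, p_j, q_i, q_j ∈ ℝⁿ be vectors and m ∈ ℝ. If q_jᵀ(f − (1/2)·S·p_j) = −(1/4)·p_jᵀSp_j − m and q_iᵀ(f − (1/2)·S·p_i) = −(1/4)·p_iᵀSp_i − m, then (q_j − q_i)ᵀ(f − (1/2)·S·p_i) = (1/2)·(q_j − p_i)ᵀS(p_j − p_i) − (1/4)·(p_j − p_i)ᵀS(p_j − p_i). -/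
open Matrix

/-- pointwise cross-term identity comparing two policy-iteration updates
(paper's Theorem 1). If `q_jᵀ(f − ½Sp_j) = −¼p_jᵀSp_j − m` and
`q_iᵀ(f − ½Sp_i) = −¼p_iᵀSp_i − m` for a symmetric positive semidefinite `S`, then
`(q_j − q_i)ᵀ(f − ½Sp_i) = ½(q_j − p_i)ᵀS(p_j − p_i) − ¼(p_j − p_i)ᵀS(p_j − p_i)`. -/
theorem stmt_3 {n : ℕ} (S : Matrix (Fin n) (Fin n) ℝ) (hS : S.PosSemidef)
    (f pi pj qi qj : Fin n → ℝ) (m : ℝ)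
    (hj : qj ⬝ᵥ (f - (1 / 2 : ℝ) • (S *ᵥ pj)) = -(1 / 4) * (pj ⬝ᵥ (S *ᵥ pj)) - m)
    (hi : qi ⬝ᵥ (f - (1 / 2 : ℝ) • (S *ᵥ pi)) = -(1 / 4) * (pi ⬝ᵥ (S *ᵥ pi)) - m) :
    (qj - qi) ⬝ᵥ (f - (1 / 2 : ℝ) • (S *ᵥ pi)) =
      (1 / 2) * ((qj - pi) ⬝ᵥ (S *ᵥ (pj - pi)))
        - (1 / 4) * ((pj - pi) ⬝ᵥ (S *ᵥ (pj - pi))) := by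
  have hsym : pj ⬝ᵥ (S *ᵥ pi) = pi ⬝ᵥ (S *ᵥ pj) := by
    have hT : Sᵀ = S := by
      have h := hS.isHermitian.eq
      rwa [conjTranspose_eq_transpose_of_trivial] at h
    rw [dotProduct_comm, dotProduct_mulVec pi, ← mulVec_transpose, hT]
  simp only [dotProduct_sub, sub_dotProduct, mulVec_sub, dotProduct_smul, smul_eq_mul] at *
  linarith
end

section
/- Let S be an n×n real symmetric positive semidefinite matrix and let f, p, q, r ∈ ℝⁿ be vectors and m ∈ ℝ. If qᵀ(f − (1/2)·S·p) = −(1/4)·pᵀSp − m and rᵀ(f − (1/2)·S·q) = −(1/4)·qᵀSq − m, then (q − r)ᵀ(f − (1/2)·S·q) = −(1/4)·(q − p)ᵀS(q − p). In particular, since S is positive semidefinite, (q − r)ᵀ(f − (1/2)·S·q) ≤ 0. -/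
open Matrix

/-- pointwise key monotonicity identity in the policy-iteration proof
(paper's Theorem 1). If `qᵀ(f − ½Sp) = −¼pᵀSp − m` and `rᵀ(f − ½Sq) = −¼qᵀSq − m`
for a symmetric positive semidefinite `S`, then
`(q − r)ᵀ(f − ½Sq) = −¼(q − p)ᵀS(q − p)`, and in particular
`(q − r)ᵀ(f − ½Sq) ≤ 0`. -/
theorem stmt_4 {n : ℕ} (S : Matrix (Fin n) (Fin n) ℝ) (hS : S.PosSemidef)
    (f p q r : Fin n → ℝ) (m : ℝ)
    (h1 : q ⬝ᵥ (f - (1 / 2 : ℝ) • (S *ᵥ p)) = -(1 / 4) * (p ⬝ᵥ (S *ᵥ p)) - m)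
    (h2 : r ⬝ᵥ (f - (1 / 2 : ℝ) • (S *ᵥ q)) = -(1 / 4) * (q ⬝ᵥ (S *ᵥ q)) - m) :
    (q - r) ⬝ᵥ (f - (1 / 2 : ℝ) • (S *ᵥ q)) =
      -(1 / 4) * ((q - p) ⬝ᵥ (S *ᵥ (q - p))) ∧
    (q - r) ⬝ᵥ (f - (1 / 2 : ℝ) • (S *ᵥ q)) ≤ 0 := by
  have hT : Sᵀ = S := by
    have h := hS.isHermitian.eq
    rwa [conjTranspose_eq_transpose_of_trivial] at h
  have hsym : p ⬝ᵥ (S *ᵥ q) = q ⬝ᵥ (S *ᵥ p) := by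
    rw [dotProduct_mulVec, ← mulVec_transpose, hT, dotProduct_comm]
  have hn : 0 ≤ (q - p) ⬝ᵥ (S *ᵥ (q - p)) := by
    have h := hS.dotProduct_mulVec_nonneg (q - p)
    rwa [star_trivial] at h
  have key : (q - r) ⬝ᵥ (f - (1 / 2 : ℝ) • (S *ᵥ q)) =
      -(1 / 4) * ((q - p) ⬝ᵥ (S *ᵥ (q - p))) := by
    rw [sub_dotProduct q r, h2]
    simp only [mulVec_sub, dotProduct_sub, sub_dotProduct, dotProduct_smul, smul_eq_mul] at h1 ⊢
    linarith
  exact ⟨key, by rw [key]; linarith⟩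
end

section
/- Let Ω ⊆ ℝⁿ be an open set, R a p×p real positive definite symmetric matrix, and let f : Ω × ℝ → ℝⁿ, g : Ω × ℝ → ℝ^{n×p}, m : Ω × ℝ → ℝ be continuously differentiable, and φ : Ω × ℝ → ℝ twice continuously differentiable. Suppose the steady-state Hamilton–Jacobi equation (∇ₓφ(x,α))ᵀ f(x,α) + m(x,α) − (1/4)(∇ₓφ(x,α))ᵀ g(x,α) R⁻¹ g(x,α)ᵀ ∇ₓφ(x,α) = 0 holds for all (x, α) ∈ Ω × ℝ. Then the function ξ(x,α) := ∂φ/∂α(x,α) satisfies, for all (x,α) ∈ Ω × ℝ, the linear first-order partial differential equation (∇ₓξ(x,α))ᵀ [f(x,α) − (1/2) g(x,α) R⁻¹ g(x,α)ᵀ ∇ₓφ(x,α)] = −(∂f/∂α(x,α))ᵀ ∇ₓφ(x,α) − ∂m/∂α(x,α) + (1/2)(∇ₓφ(x,α))ᵀ (∂g/∂α(x,α)) R⁻¹ g(x,α)ᵀ ∇ₓφ(x,α). -/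
open Matrix

attribute [local instance] Matrix.normedAddCommGroup Matrix.normedSpace

theorem aux_dot {k : ℕ} {u v : ℝ → Fin k → ℝ} {u' v' : Fin k → ℝ} {α : ℝ}
    (hu : HasDerivAt u u' α) (hv : HasDerivAt v v' α) :
    HasDerivAt (fun β => u β ⬝ᵥ v β) (u' ⬝ᵥ v α + u α ⬝ᵥ v') α := by
  rw [hasDerivAt_pi] at hu hv
  have := HasDerivAt.fun_sum (u := Finset.univ) (fun i _ => (hu i).mul (hv i))
  simpa [dotProduct, Finset.sum_add_distrib] using this

theorem aux_mulVec {k l : ℕ} {G : ℝ → Matrix (Fin k) (Fin l) ℝ} {G' : Matrix (Fin k) (Fin l) ℝ}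
    {v : ℝ → Fin l → ℝ} {v' : Fin l → ℝ} {α : ℝ}
    (hG : ∀ i j, HasDerivAt (fun β => G β i j) (G' i j) α) (hv : HasDerivAt v v' α) :
    HasDerivAt (fun β => G β *ᵥ v β) (G' *ᵥ v α + G α *ᵥ v') α := by
  rw [hasDerivAt_pi]
  intro i
  exact aux_dot (u := fun β => G β i) (hasDerivAt_pi.2 (hG i)) hv

theorem aux_mixed {n : ℕ} (Ω : Set (Fin n → ℝ)) (hΩ : IsOpen Ω)
    (φ : (Fin n → ℝ) → ℝ → ℝ)
    (hφ : ContDiffOn ℝ 2 (fun pr : (Fin n → ℝ) × ℝ => φ pr.1 pr.2) (Ω ×ˢ Set.univ))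
    (gradφ : (Fin n → ℝ) → ℝ → (Fin n → ℝ))
    (hgradφ : ∀ x ∈ Ω, ∀ α : ℝ, DifferentiableAt ℝ (fun y => φ y α) x ∧
      ∀ v, fderiv ℝ (fun y => φ y α) x v = gradφ x α ⬝ᵥ v)
    (φα : (Fin n → ℝ) → ℝ → ℝ)
    (hφα : ∀ x ∈ Ω, ∀ α : ℝ, HasDerivAt (fun β => φ x β) (φα x α) α)
    (gradξ : (Fin n → ℝ) → ℝ → (Fin n → ℝ))
    (hgradξ : ∀ x ∈ Ω, ∀ α : ℝ, DifferentiableAt ℝ (fun y => φα y α) x ∧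
      ∀ v, fderiv ℝ (fun y => φα y α) x v = gradξ x α ⬝ᵥ v)
    (x : Fin n → ℝ) (hx : x ∈ Ω) (α : ℝ) :
    HasDerivAt (fun β => gradφ x β) (gradξ x α) α := by
  set F : (Fin n → ℝ) × ℝ → ℝ := fun pr => φ pr.1 pr.2 with hF
  have hO : IsOpen (Ω ×ˢ (Set.univ : Set ℝ)) := hΩ.prod isOpen_univ
  have hC : ∀ y ∈ Ω, ∀ β : ℝ, ContDiffAt ℝ 2 F (y, β) := fun y hy β =>
    hφ.contDiffAt (hO.mem_nhds ⟨hy, trivial⟩)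
  have hD : ∀ y ∈ Ω, ∀ β : ℝ, HasFDerivAt F (fderiv ℝ F (y, β)) (y, β) := fun y hy β =>
    ((hC y hy β).differentiableAt (by norm_num)).hasFDerivAt
  have hl : ∀ (y : Fin n → ℝ) (β : ℝ), HasFDerivAt (fun z : Fin n → ℝ => (z, β))
      (ContinuousLinearMap.inl ℝ (Fin n → ℝ) ℝ) y := fun y β => hasFDerivAt_prodMk_left y β
  have hr : ∀ (y : Fin n → ℝ) (β : ℝ), HasFDerivAt (fun b : ℝ => (y, b))
      (ContinuousLinearMap.inr ℝ (Fin n → ℝ) ℝ) β := fun y β => hasFDerivAt_prodMk_right y β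
  have h1 : ∀ y ∈ Ω, ∀ β : ℝ, ∀ v, gradφ y β ⬝ᵥ v = fderiv ℝ F (y, β) (v, 0) := by
    intro y hy β v
    have h := ((hD y hy β).comp y (hl y β)).fderiv
    rw [← (hgradφ y hy β).2 v]
    change fderiv ℝ (F ∘ fun z => (z, β)) y v = _
    rw [h]; simp
  have h2 : ∀ y ∈ Ω, ∀ β : ℝ, φα y β = fderiv ℝ F (y, β) (0, 1) := by
    intro y hy β
    have h := ((hD y hy β).comp β (hr y β)).hasDerivAt
    have := (hφα y hy β).unique h
    rw [this]; simp
  have hS : IsSymmSndFDerivAt ℝ F (x, α) := (hC x hx α).isSymmSndFDerivAt (by simp)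
  have hDD : HasFDerivAt (fderiv ℝ F) (fderiv ℝ (fderiv ℝ F) (x, α)) (x, α) :=
    (((hC x hx α).fderiv_right (m := 1) (by norm_num)).differentiableAt
      (by norm_num)).hasFDerivAt
  have hξ : ∀ v, gradξ x α ⬝ᵥ v = fderiv ℝ (fderiv ℝ F) (x, α) (v, 0) (0, 1) := by
    intro v
    rw [← (hgradξ x hx α).2 v]
    have he : (fun y => φα y α) =ᶠ[nhds x] fun y => fderiv ℝ F (y, α) (0, 1) := by
      filter_upwards [hΩ.mem_nhds hx] with y hy using h2 y hy α
    rw [he.fderiv_eq]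
    have h := (hDD.comp x (hl x α)).clm_apply (hasFDerivAt_const ((0, 1) : (Fin n → ℝ) × ℝ) x)
    have h := h.fderiv
    simp only [Function.comp_def] at h
    rw [h]; simp
  rw [hasDerivAt_pi]
  intro i
  have e1 : (fun β => gradφ x β i) = fun β => fderiv ℝ F (x, β) (Pi.single i 1, 0) := by
    funext β
    rw [← h1 x hx β]; simp
  have e2 : gradξ x α i = fderiv ℝ (fderiv ℝ F) (x, α) (0, 1) (Pi.single i 1, 0) := by
    rw [hS.eq, ← hξ]; simp
  rw [e1, e2]
  have h := ((hDD.comp α (hr x α)).clm_apply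
    (hasFDerivAt_const ((Pi.single i 1, 0) : (Fin n → ℝ) × ℝ) α)).hasDerivAt
  simpa [Function.comp_def] using h

/-- differentiating the parameterized steady-state Hamilton–Jacobi
equation with respect to the scalar parameter `α` (paper's equation (19)).
Here `gradφ x α = ∇ₓφ(x,α)`, `φα x α = ∂φ/∂α(x,α)` (the sensitivity `ξ`),
`gradξ x α = ∇ₓξ(x,α)`, `fα = ∂f/∂α`, `mα = ∂m/∂α`, `gα = ∂g/∂α`; these are tied
to `φ, f, m, g` by the derivative hypotheses below. If the Hamilton–Jacobi equation
`(∇ₓφ)ᵀf + m − ¼(∇ₓφ)ᵀgR⁻¹gᵀ∇ₓφ = 0` holds on `Ω × ℝ`, then `ξ = ∂φ/∂α` satisfies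
the linear first-order PDE
`(∇ₓξ)ᵀ[f − ½gR⁻¹gᵀ∇ₓφ] = −(∂f/∂α)ᵀ∇ₓφ − ∂m/∂α + ½(∇ₓφ)ᵀ(∂g/∂α)R⁻¹gᵀ∇ₓφ`. -/
theorem stmt_6 {n p : ℕ} (Ω : Set (Fin n → ℝ)) (hΩ : IsOpen Ω)
    (R : Matrix (Fin p) (Fin p) ℝ) (hR : R.PosDef) (hRsymm : Rᵀ = R)
    (f : (Fin n → ℝ) → ℝ → (Fin n → ℝ))
    (g : (Fin n → ℝ) → ℝ → Matrix (Fin n) (Fin p) ℝ)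
    (m : (Fin n → ℝ) → ℝ → ℝ)
    (φ : (Fin n → ℝ) → ℝ → ℝ)
    -- smoothness: f, g, m are C¹ and φ is C² jointly in (x, α) on Ω × ℝ
    (hf : ContDiffOn ℝ 1 (fun pr : (Fin n → ℝ) × ℝ => f pr.1 pr.2) (Ω ×ˢ Set.univ))
    (hg : ContDiffOn ℝ 1 (fun pr : (Fin n → ℝ) × ℝ => g pr.1 pr.2) (Ω ×ˢ Set.univ))
    (hm : ContDiffOn ℝ 1 (fun pr : (Fin n → ℝ) × ℝ => m pr.1 pr.2) (Ω ×ˢ Set.univ))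
    (hφ : ContDiffOn ℝ 2 (fun pr : (Fin n → ℝ) × ℝ => φ pr.1 pr.2) (Ω ×ˢ Set.univ))
    -- named derivatives
    (gradφ : (Fin n → ℝ) → ℝ → (Fin n → ℝ))
    (hgradφ : ∀ x ∈ Ω, ∀ α : ℝ, DifferentiableAt ℝ (fun y => φ y α) x ∧
      ∀ v, fderiv ℝ (fun y => φ y α) x v = gradφ x α ⬝ᵥ v)
    (φα : (Fin n → ℝ) → ℝ → ℝ)
    (hφα : ∀ x ∈ Ω, ∀ α : ℝ, HasDerivAt (fun β => φ x β) (φα x α) α)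
    (gradξ : (Fin n → ℝ) → ℝ → (Fin n → ℝ))
    (hgradξ : ∀ x ∈ Ω, ∀ α : ℝ, DifferentiableAt ℝ (fun y => φα y α) x ∧
      ∀ v, fderiv ℝ (fun y => φα y α) x v = gradξ x α ⬝ᵥ v)
    (fα : (Fin n → ℝ) → ℝ → (Fin n → ℝ))
    (hfα : ∀ x ∈ Ω, ∀ α : ℝ, HasDerivAt (fun β => f x β) (fα x α) α)
    (mα : (Fin n → ℝ) → ℝ → ℝ)
    (hmα : ∀ x ∈ Ω, ∀ α : ℝ, HasDerivAt (fun β => m x β) (mα x α) α)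
    (gα : (Fin n → ℝ) → ℝ → Matrix (Fin n) (Fin p) ℝ)
    (hgα : ∀ x ∈ Ω, ∀ α : ℝ, HasDerivAt (fun β => g x β) (gα x α) α)
    -- the parameterized Hamilton–Jacobi equation
    (hHJ : ∀ x ∈ Ω, ∀ α : ℝ,
      gradφ x α ⬝ᵥ f x α + m x α
        - (1 / 4) * (gradφ x α ⬝ᵥ ((g x α * R⁻¹ * (g x α)ᵀ) *ᵥ gradφ x α)) = 0) :
    ∀ x ∈ Ω, ∀ α : ℝ,
      gradξ x α ⬝ᵥ
          (f x α - (1 / 2 : ℝ) • ((g x α * R⁻¹ * (g x α)ᵀ) *ᵥ gradφ x α)) =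
        -(fα x α ⬝ᵥ gradφ x α) - mα x α
          + (1 / 2) * (gradφ x α ⬝ᵥ ((gα x α * R⁻¹ * (g x α)ᵀ) *ᵥ gradφ x α)) := by
  intro x hx α
  have hv := aux_mixed Ω hΩ φ hφ gradφ hgradφ φα hφα gradξ hgradξ x hx α
  have hG : ∀ i j, HasDerivAt (fun β => g x β i j) (gα x α i j) α := fun i j =>
    hasDerivAt_pi.1 (hasDerivAt_pi.1 (hgα x hx α) i) j
  have hw := aux_mulVec (G := fun β => (g x β)ᵀ) (G' := (gα x α)ᵀ) (fun i j => hG j i) hv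
  have hSw := aux_mulVec (G := fun _ => R⁻¹) (G' := 0)
    (fun i j => hasDerivAt_const α (R⁻¹ i j)) hw
  have hq := aux_dot hw hSw
  have hT := ((aux_dot hv (hfα x hx α)).add (hmα x hx α)).sub (hq.const_mul (1 / 4))
  have key : ∀ (A B : Matrix (Fin n) (Fin p) ℝ) (u v : Fin n → ℝ),
      u ⬝ᵥ ((A * R⁻¹ * Bᵀ) *ᵥ v) = (Aᵀ *ᵥ u) ⬝ᵥ (R⁻¹ *ᵥ (Bᵀ *ᵥ v)) := by
    intro A B u v
    rw [← Matrix.mulVec_mulVec, ← Matrix.mulVec_mulVec, Matrix.dotProduct_mulVec,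
      Matrix.mulVec_transpose A]
  have hsym : ∀ a b : Fin p → ℝ, a ⬝ᵥ (R⁻¹ *ᵥ b) = b ⬝ᵥ (R⁻¹ *ᵥ a) := by
    intro a b
    rw [Matrix.dotProduct_mulVec, ← Matrix.mulVec_transpose, Matrix.transpose_nonsing_inv,
      hRsymm, dotProduct_comm]
  have h0 := hT.unique ((hasDerivAt_const α (0 : ℝ)).congr_of_eventuallyEq
    (Filter.Eventually.of_forall fun β => by
      have := hHJ x hx β
      rw [key] at this
      simpa using this))
  simp only [Matrix.zero_mulVec, zero_add] at h0
  rw [hsym ((g x α)ᵀ *ᵥ gradφ x α)] at h0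
  rw [dotProduct_sub, dotProduct_smul, key, key, dotProduct_comm (fα x α)]
  simp only [add_dotProduct, smul_eq_mul] at h0 ⊢
  linarith
end

section
/- Let S be an n×n real symmetric positive semidefinite matrix, f, p, q ∈ ℝⁿ vectors, and m > 0 a real number. If qᵀ(f − (1/2)·S·p) = −(1/4)·pᵀSp − m, then qᵀ(f − (1/2)·S·q) = −(1/4)·(p − q)ᵀS(p − q) − (1/4)·qᵀSq − m < 0; in particular q ≠ 0 implies that the closed-loop vector field value f − (1/2)·S·q makes a strictly negative inner product with q. -/
open Matrix

/-- strict Lyapunov-decrease consequence in the proof of the paper's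
Theorem 1. If `m > 0` and `qᵀ(f − ½Sp) = −¼pᵀSp − m` for a symmetric positive
semidefinite `S`, then
`qᵀ(f − ½Sq) = −¼(p−q)ᵀS(p−q) − ¼qᵀSq − m < 0`: the closed-loop vector field value
`f − ½Sq` makes a strictly negative inner product with `q`. -/
theorem stmt_13 {n : ℕ} (S : Matrix (Fin n) (Fin n) ℝ) (hS : S.PosSemidef)
    (f p q : Fin n → ℝ) (m : ℝ) (hm : 0 < m)
    (h : q ⬝ᵥ (f - (1 / 2 : ℝ) • (S *ᵥ p)) = -(1 / 4) * (p ⬝ᵥ (S *ᵥ p)) - m) :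
    q ⬝ᵥ (f - (1 / 2 : ℝ) • (S *ᵥ q)) =
      -(1 / 4) * ((p - q) ⬝ᵥ (S *ᵥ (p - q))) - (1 / 4) * (q ⬝ᵥ (S *ᵥ q)) - m ∧
    q ⬝ᵥ (f - (1 / 2 : ℝ) • (S *ᵥ q)) < 0 := by
  have hsym : p ⬝ᵥ (S *ᵥ q) = q ⬝ᵥ (S *ᵥ p) := by
    have hT : Sᵀ = S := by simpa using hS.isHermitian.eq
    rw [dotProduct_mulVec, ← mulVec_transpose, hT, dotProduct_comm]
  have h1 : 0 ≤ (p - q) ⬝ᵥ (S *ᵥ (p - q)) := by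
    simpa only [star_trivial] using hS.dotProduct_mulVec_nonneg (p - q)
  have h2 : 0 ≤ q ⬝ᵥ (S *ᵥ q) := by
    simpa only [star_trivial] using hS.dotProduct_mulVec_nonneg q
  have key : q ⬝ᵥ (f - (1 / 2 : ℝ) • (S *ᵥ q)) =
      -(1 / 4) * ((p - q) ⬝ᵥ (S *ᵥ (p - q))) - (1 / 4) * (q ⬝ᵥ (S *ᵥ q)) - m := by
    simp only [mulVec_sub, dotProduct_sub, sub_dotProduct, dotProduct_smul, smul_eq_mul] at h ⊢
    linarith
  exact ⟨key, by linarith⟩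
end
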